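/- Let −|a| < α < β < |a| and let K be a smooth complex-valued function on [α, β]. For each positive integer n, let y₀ < y₁ < ... < y_{s_n} enumerate the integers y with y + n even and nα ≤ y ≤ nβ. Then lim_{n→∞} (2/n) Σ_{j=0}^{s_n} K(y_j/n) e^{i n θ(y_j/n)} = 0. -/

import Mathlib

/-!
The phase satisfies `θ' = -2t`, because `μ'(t(η)) = η`. Passing from `y` to `y + 2` therefore
multiplies `e^{inθ(y/n)}` by `e^{2iθ'(y/n)} = e^{-4it(y/n)}` up to `o(1)`, uniformly in `y`. If the
amplitude is divisible by `u = e^{2iθ'} - 1`, say `K = H u` with `H` continuous, then each summand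
is a difference of consecutive values of `H(y/n) e^{inθ(y/n)}` up to `o(1)`, so the sum telescopes
and is `o(n)`. A general continuous `K` agrees with such an `H u` off any given neighbourhood of the
zeros of `u`. As `|t| < π/2`, the only zero is `η = 0`, and a short interval around it carries a
small proportion of the points.
-/

open Filter Topology Asymptotics MeasureTheory

noncomputable section

/-- One step of the (column-decomposition) quantum walk `U` on functions `ℤ → ℂ²`:
`(Uf)(x) = P f(x+1) + Q f(x-1)` with `P = [[a,0],[-conj b,0]]`, `Q = [[0,b],[0,conj a]]`. -/
def qwStep (a b : ℂ) (f : ℤ → ℂ × ℂ) : ℤ → ℂ × ℂ := fun x =>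
  (a * (f (x + 1)).1 + b * (f (x - 1)).2,
   -(starRingEnd ℂ) b * (f (x + 1)).1 + (starRingEnd ℂ) a * (f (x - 1)).2)

/-- `δ₀ ⊗ φ : ℤ → ℂ²`. -/
def qwDelta (φ : ℂ × ℂ) : ℤ → ℂ × ℂ := fun x => if x = 0 then φ else 0

/-- Squared norm of a vector in `ℂ²`. -/
def nsq (u : ℂ × ℂ) : ℝ := ‖u.1‖ ^ 2 + ‖u.2‖ ^ 2

/-- Transition probability `p_n(φ; y) = ‖(Uⁿ(δ₀ ⊗ φ))(y)‖²`. -/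
def qwP (a b : ℂ) (φ : ℂ × ℂ) (n : ℕ) (y : ℤ) : ℝ :=
  nsq (((qwStep a b)^[n] (qwDelta φ)) y)

/-- `λ_A(φ) = |φ₂|² − |φ₁|² + (1/|a|²)(ab conj(φ₁)φ₂ + conj(ab) φ₁ conj(φ₂))` (a real number). -/
def lamA (a b : ℂ) (φ : ℂ × ℂ) : ℝ :=
  ‖φ.2‖ ^ 2 - ‖φ.1‖ ^ 2 +
    (a * b * (starRingEnd ℂ) φ.1 * φ.2 +
      (starRingEnd ℂ) a * (starRingEnd ℂ) b * φ.1 * (starRingEnd ℂ) φ.2).re / ‖a‖ ^ 2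

/-- `μ(t) = arccos(|a| cos t)`. -/
def muF (a : ℂ) (t : ℝ) : ℝ := Real.arccos (‖a‖ * Real.cos t)

/-- `t(η) = arcsin(|b|η/(|a|√(1 − η²)))`. -/
def tF (a b : ℂ) (η : ℝ) : ℝ := Real.arcsin (‖b‖ * η / (‖a‖ * Real.sqrt (1 - η ^ 2)))

/-- `θ(η) = 2μ(t(η)) − 2η t(η)`. -/
def thetaF (a b : ℂ) (η : ℝ) : ℝ := 2 * muF a (tF a b η) - 2 * η * tF a b η

/-- The set of integers `y` with `y + n` even and `nα ≤ y ≤ nβ`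
(for `n ≥ 1`, `nα ≤ y ↔ ⌈nα⌉ ≤ y` and `y ≤ nβ ↔ y ≤ ⌊nβ⌋`). These are exactly the points
`y₀ < y₁ < ⋯ < y_{s_n}` of the paper; a partial sum `∑_{j=0}^{k}` over the enumeration is the
same as a sum over the elements `≤ m` for a cutoff `m = y_k`. -/
def Tset (α β : ℝ) (n : ℕ) : Finset ℤ :=
  (Finset.Icc ⌈(n : ℝ) * α⌉ ⌊(n : ℝ) * β⌋).filter fun y => Even ((n : ℤ) + y)

/-! ### The summation set -/

lemma mem_Tset {α β : ℝ} {n : ℕ} (hn : 0 < n) {y : ℤ} :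
    y ∈ Tset α β n ↔ (y : ℝ) / n ∈ Set.Icc α β ∧ Even ((n : ℤ) + y) := by
  have hn' : (0 : ℝ) < n := by exact_mod_cast hn
  rw [Tset, Finset.mem_filter, Finset.mem_Icc, Int.ceil_le, Int.le_floor, Set.mem_Icc,
    le_div_iff₀' hn', div_le_iff₀' hn']

lemma card_Tset_le (α β : ℝ) (n : ℕ) : ((Tset α β n).card : ℝ) ≤ |β - α| * n + 1 := by
  have hcard : (Tset α β n).card ≤ (⌊(n : ℝ) * β⌋ + 1 - ⌈(n : ℝ) * α⌉).toNat :=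
    (Finset.card_filter_le _ _).trans_eq (Int.card_Icc _ _)
  have hlen : (n : ℝ) * (β - α) ≤ |β - α| * n := by
    rw [mul_comm]
    gcongr
    exact le_abs_self _
  calc ((Tset α β n).card : ℝ)
      ≤ ((⌊(n : ℝ) * β⌋ + 1 - ⌈(n : ℝ) * α⌉).toNat : ℤ) := by exact_mod_cast hcard
    _ = max ((⌊(n : ℝ) * β⌋ : ℝ) + 1 - ⌈(n : ℝ) * α⌉) 0 := by
        rw [Int.toNat_eq_max]
        push_cast
        rfl
    _ ≤ |β - α| * n + 1 := by
        refine max_le ?_ (by positivity)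
        linarith [Int.floor_le ((n : ℝ) * β), Int.le_ceil ((n : ℝ) * α)]

lemma exists_Tset_eq_image_range (α β : ℝ) (n : ℕ) :
    ∃ (y₀ : ℤ) (N : ℕ), Tset α β n = (Finset.range N).image fun j : ℕ => y₀ + 2 * (j : ℤ) := by
  obtain ⟨y₀, hle, hlt, r, hr⟩ : ∃ y₀ : ℤ, ⌈(n : ℝ) * α⌉ ≤ y₀ ∧ y₀ ≤ ⌈(n : ℝ) * α⌉ + 1 ∧
      Even ((n : ℤ) + y₀) := by
    rcases Int.even_or_odd ((n : ℤ) + ⌈(n : ℝ) * α⌉) with h | h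
    · exact ⟨_, le_rfl, by lia, h⟩
    · exact ⟨⌈(n : ℝ) * α⌉ + 1, by lia, le_rfl, by rw [← add_assoc]; exact h.add_one⟩
  refine ⟨y₀, ((⌊(n : ℝ) * β⌋ - y₀) / 2 + 1).toNat, Finset.ext fun y => ?_⟩
  simp only [Tset, Finset.mem_filter, Finset.mem_Icc, Finset.mem_image, Finset.mem_range]
  constructor
  · rintro ⟨⟨_, _⟩, s, _⟩
    exact ⟨(s - r).toNat, by lia, by lia⟩
  · rintro ⟨j, _, rfl⟩
    exact ⟨⟨by lia, by lia⟩, r + j, by lia⟩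

open Classical in
lemma card_filter_Tset_thickening_le (α β : ℝ) (Z : Finset ℝ) {δ : ℝ} (hδ : 0 ≤ δ) {n : ℕ}
    (hn : 0 < n) :
    (((Tset α β n).filter fun y : ℤ => (y : ℝ) / n ∈ Metric.thickening δ (Z : Set ℝ)).card : ℝ) ≤
      Z.card * (2 * δ * n + 1) := by
  have hsub : ((Tset α β n).filter fun y : ℤ => (y : ℝ) / n ∈ Metric.thickening δ (Z : Set ℝ)) ⊆
      Z.biUnion fun z => Tset (z - δ) (z + δ) n := by
    intro y hy
    obtain ⟨hyT, hyZ⟩ := Finset.mem_filter.1 hy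
    obtain ⟨z, hz, hdist⟩ := Metric.mem_thickening_iff.1 hyZ
    have hclose := abs_le.1 (Real.dist_eq _ z ▸ hdist.le)
    exact Finset.mem_biUnion.2 ⟨z, hz, (mem_Tset hn).2
      ⟨⟨by linarith [hclose.1], by linarith [hclose.2]⟩, ((mem_Tset hn).1 hyT).2⟩⟩
  calc (((Tset α β n).filter fun y : ℤ => (y : ℝ) / n ∈ Metric.thickening δ (Z : Set ℝ)).card : ℝ)
      ≤ ∑ z ∈ Z, ((Tset (z - δ) (z + δ) n).card : ℝ) := by
        exact_mod_cast (Finset.card_le_card hsub).trans Finset.card_biUnion_le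
    _ ≤ ∑ _z ∈ Z, (2 * δ * n + 1) := by
        refine Finset.sum_le_sum fun z _ => (card_Tset_le _ _ n).trans_eq ?_
        rw [show z + δ - (z - δ) = 2 * δ by ring, abs_of_nonneg (by positivity)]
    _ = Z.card * (2 * δ * n + 1) := by rw [Finset.sum_const, nsmul_eq_mul]

lemma eventually_le_mul_natCast (C : ℝ) {c : ℝ} (hc : 0 < c) : ∀ᶠ n : ℕ in atTop, C ≤ c * n :=
  (tendsto_natCast_atTop_atTop.const_mul_atTop hc).eventually_ge_atTop C

open Classical in
lemma exists_eventually_card_filter_Tset_thickening_le (α β : ℝ) (Z : Finset ℝ) {c : ℝ}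
    (hc : 0 < c) : ∃ δ > 0, ∀ᶠ n : ℕ in atTop,
      (((Tset α β n).filter fun y : ℤ => (y : ℝ) / n ∈ Metric.thickening δ (Z : Set ℝ)).card : ℝ) ≤
        c * n := by
  refine ⟨c / (4 * (Z.card + 1)), by positivity, ?_⟩
  filter_upwards [eventually_gt_atTop 0, eventually_le_mul_natCast Z.card (half_pos hc)]
    with n hn hZ
  refine (card_filter_Tset_thickening_le α β Z (by positivity) hn).trans ?_
  have hδ : (Z.card : ℝ) * (2 * (c / (4 * (Z.card + 1)))) ≤ c / 2 := by
    field_simp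
    linarith
  calc (Z.card : ℝ) * (2 * (c / (4 * (Z.card + 1))) * n + 1)
      = Z.card * (2 * (c / (4 * (Z.card + 1)))) * n + Z.card := by ring
    _ ≤ c / 2 * n + c / 2 * n := by gcongr
    _ = c * n := by ring

/-! ### Telescoping up to a small error -/

lemma norm_sum_range_le_of_norm_sub_sub_le {E : Type*} [SeminormedAddCommGroup E] {f F : ℕ → E}
    {N : ℕ} {ε : ℝ} (h : ∀ j < N, ‖f j - (F (j + 1) - F j)‖ ≤ ε) :
    ‖∑ j ∈ Finset.range N, f j‖ ≤ N * ε + (‖F N‖ + ‖F 0‖) := by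
  have herror : ‖∑ j ∈ Finset.range N, (f j - (F (j + 1) - F j))‖ ≤ N * ε := by
    refine (norm_sum_le_of_le _ fun j hj => h j (Finset.mem_range.1 hj)).trans_eq ?_
    rw [Finset.sum_const, Finset.card_range, nsmul_eq_mul]
  calc ‖∑ j ∈ Finset.range N, f j‖
      = ‖∑ j ∈ Finset.range N, (f j - (F (j + 1) - F j)) + (F N - F 0)‖ := by
        rw [Finset.sum_sub_distrib, Finset.sum_range_sub, sub_add_cancel]
    _ ≤ N * ε + (‖F N‖ + ‖F 0‖) := norm_add_le_of_le herror (norm_sub_le _ _)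

lemma norm_sum_Tset_le_of_norm_sub_sub_le {E : Type*} [SeminormedAddCommGroup E] {f F : ℤ → E}
    {α β ε A B : ℝ} {n : ℕ} (hε : 0 ≤ ε) (hA : 0 ≤ A) (hB : 0 ≤ B)
    (hf : ∀ y ∈ Tset α β n, ‖f y‖ ≤ A) (hF : ∀ y ∈ Tset α β n, ‖F y‖ ≤ B)
    (h : ∀ y ∈ Tset α β n, y + 2 ∈ Tset α β n → ‖f y - (F (y + 2) - F y)‖ ≤ ε) :
    ‖∑ y ∈ Tset α β n, f y‖ ≤ (Tset α β n).card * ε + (A + 2 * B) := by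
  obtain ⟨y₀, N, hT⟩ := exists_Tset_eq_image_range α β n
  have hinj : Function.Injective fun j : ℕ => y₀ + 2 * (j : ℤ) := fun i j hij => by
    simpa using hij
  have hmem {j : ℕ} (hj : j < N) : y₀ + 2 * (j : ℤ) ∈ Tset α β n :=
    hT ▸ Finset.mem_image_of_mem _ (Finset.mem_range.2 hj)
  have hcard : (Tset α β n).card = N := by
    rw [hT, Finset.card_image_of_injective _ hinj, Finset.card_range]
  rw [hcard, hT, Finset.sum_image hinj.injOn]
  rcases N with _ | N
  · rw [Finset.range_zero, Finset.sum_empty, norm_zero]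
    positivity
  have hinit := norm_sum_range_le_of_norm_sub_sub_le (N := N) (ε := ε)
    (f := fun j => f (y₀ + 2 * (j : ℤ))) (F := fun j => F (y₀ + 2 * (j : ℤ))) fun j hj => by
      have hnext : y₀ + 2 * ((j + 1 : ℕ) : ℤ) = y₀ + 2 * (j : ℤ) + 2 := by push_cast; ring
      have hmem_next := hmem (Nat.succ_lt_succ hj)
      rw [hnext] at hmem_next ⊢
      exact h _ (hmem (hj.trans N.lt_succ_self)) hmem_next
  rw [Finset.sum_range_succ]
  refine (norm_add_le_of_le hinit (hf _ (hmem N.lt_succ_self))).trans ?_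
  have hfirst := hF _ (hmem N.succ_pos)
  have hlast := hF _ (hmem N.lt_succ_self)
  rw [Nat.cast_succ]
  linarith

/-! ### Oscillating sums -/

/-- The oscillating factor `e^{inθ(y/n)}` of a phase `θ`. -/
def phaseWave (θ : ℝ → ℝ) (n : ℕ) (y : ℤ) : ℂ :=
  Complex.exp (Complex.I * (n : ℂ) * ((θ ((y : ℝ) / (n : ℝ)) : ℝ) : ℂ))

/-- The factor `e^{2iθ'(η)}` by which `phaseWave θ n y` is multiplied, in the limit `n → ∞`, when
`y = nη` increases by `2`. The argument `θ'` stands for the derivative of the phase. -/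
def phaseRotation (θ' : ℝ → ℝ) (η : ℝ) : ℂ := Complex.exp (Complex.I * ((2 * θ' η : ℝ) : ℂ))

lemma phaseWave_eq_exp_I_mul (θ : ℝ → ℝ) (n : ℕ) (y : ℤ) :
    phaseWave θ n y = Complex.exp (Complex.I * ((n * θ ((y : ℝ) / n) : ℝ) : ℂ)) := by
  rw [phaseWave, mul_assoc, Complex.ofReal_mul, Complex.ofReal_natCast]

lemma norm_phaseWave (θ : ℝ → ℝ) (n : ℕ) (y : ℤ) : ‖phaseWave θ n y‖ = 1 := by
  rw [phaseWave_eq_exp_I_mul, Complex.norm_exp_I_mul_ofReal]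

lemma norm_phaseRotation_sub_one_le (θ' : ℝ → ℝ) (η : ℝ) : ‖phaseRotation θ' η - 1‖ ≤ 2 := by
  refine (norm_sub_le _ _).trans_eq ?_
  rw [phaseRotation, Complex.norm_exp_I_mul_ofReal, norm_one]
  norm_num

lemma continuousOn_phaseRotation {θ' : ℝ → ℝ} {s : Set ℝ} (h : ContinuousOn θ' s) :
    ContinuousOn (phaseRotation θ') s := by
  unfold phaseRotation
  fun_prop

lemma norm_exp_I_mul_sub_exp_I_mul_le (x y : ℝ) :
    ‖Complex.exp (Complex.I * x) - Complex.exp (Complex.I * y)‖ ≤ |x - y| := by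
  have hfactor : Complex.exp (Complex.I * x) - Complex.exp (Complex.I * y) =
      Complex.exp (Complex.I * y) * (Complex.exp (Complex.I * ((x - y : ℝ) : ℂ)) - 1) := by
    rw [mul_sub, ← Complex.exp_add, mul_one]
    push_cast
    ring_nf
  rw [hfactor, norm_mul, Complex.norm_exp_I_mul_ofReal, one_mul]
  exact Real.norm_exp_I_mul_ofReal_sub_one_le

lemma eventually_forall_dist_le_of_isCompact {ι X Y : Type*} [PseudoMetricSpace X]
    [PseudoMetricSpace Y] {f : X → Y} {s : Set X} (hs : IsCompact s) (hf : ContinuousOn f s)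
    {l : Filter ι} {r : ι → ℝ} (hr : Tendsto r l (𝓝 0)) {ε : ℝ} (hε : 0 < ε) :
    ∀ᶠ i in l, ∀ x ∈ s, ∀ y ∈ s, dist x y ≤ r i → dist (f x) (f y) ≤ ε := by
  obtain ⟨δ, hδ, h⟩ :=
    Metric.uniformContinuousOn_iff_le.1 (hs.uniformContinuousOn_of_continuous hf) ε hε
  filter_upwards [hr.eventually_le_const hδ] with i hi x hx y hy hxy
  exact h x hx y hy (hxy.trans hi)

lemma norm_image_sub_sub_smul_le_of_hasDerivWithinAt {𝕜 E : Type*} [RCLike 𝕜]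
    [NormedAddCommGroup E] [NormedSpace 𝕜 E] {f f' : 𝕜 → E} {m : E} {C : ℝ} {s : Set 𝕜} {x y : 𝕜}
    (hf : ∀ z ∈ s, HasDerivWithinAt f (f' z) s z) (bound : ∀ z ∈ s, ‖f' z - m‖ ≤ C)
    (hs : Convex ℝ s) (hx : x ∈ s) (hy : y ∈ s) :
    ‖f y - f x - (y - x) • m‖ ≤ C * ‖y - x‖ := by
  have hdiff (z : 𝕜) (hz : z ∈ s) :
      HasDerivWithinAt (fun z => f z - z • m) (f' z - m) s z :=
    ((hf z hz).sub ((hasDerivWithinAt_id z s).smul_const m)).congr_deriv (by rw [one_smul])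
  calc ‖f y - f x - (y - x) • m‖ = ‖(f y - y • m) - (f x - x • m)‖ := by
        congr 1
        module
    _ ≤ C * ‖y - x‖ := hs.norm_image_sub_le_of_norm_hasDerivWithin_le hdiff bound hx hy

section Phase

variable {θ θ' : ℝ → ℝ} {α β : ℝ}

lemma norm_phaseRotation_mul_phaseWave_sub_le
    (hθ : ∀ η ∈ Set.Icc α β, HasDerivWithinAt θ (θ' η) (Set.Icc α β) η) {n : ℕ} (hn : 0 < n)
    {y : ℤ} {ε : ℝ} (hy : (y : ℝ) / n ∈ Set.Icc α β)
    (hy_next : ((y + 2 : ℤ) : ℝ) / n ∈ Set.Icc α β)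
    (hε : ∀ x ∈ Set.Icc α β, dist x ((y : ℝ) / n) ≤ 2 / n → dist (θ' x) (θ' ((y : ℝ) / n)) ≤ ε) :
    ‖phaseRotation θ' ((y : ℝ) / n) * phaseWave θ n y - phaseWave θ n (y + 2)‖ ≤ 2 * ε := by
  have hn' : (0 : ℝ) < n := by exact_mod_cast hn
  rw [phaseRotation, phaseWave_eq_exp_I_mul, phaseWave_eq_exp_I_mul, ← Complex.exp_add, ← mul_add,
    ← Complex.ofReal_add]
  have hnext : ((y + 2 : ℤ) : ℝ) / n = (y : ℝ) / n + 2 / n := by push_cast; ring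
  rw [hnext] at hy_next ⊢
  set η := (y : ℝ) / n
  have hsub : Set.Icc η (η + 2 / n) ⊆ Set.Icc α β := Set.Icc_subset_Icc hy.1 hy_next.2
  have hstep : (0 : ℝ) ≤ 2 / n := by positivity
  have htaylor : |θ (η + 2 / n) - θ η - 2 / n * θ' η| ≤ ε * (2 / n) := by
    have hmvt := norm_image_sub_sub_smul_le_of_hasDerivWithinAt (m := θ' η) (C := ε)
      (fun x hx => (hθ x (hsub hx)).mono hsub)
      (fun x hx => by
        refine hε x (hsub hx) ?_
        rw [Real.dist_eq, abs_of_nonneg (by linarith [hx.1])]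
        linarith [hx.2])
      (convex_Icc η (η + 2 / n)) (Set.left_mem_Icc.2 (by linarith))
      (Set.right_mem_Icc.2 (by linarith))
    rwa [add_sub_cancel_left, Real.norm_eq_abs, Real.norm_eq_abs, abs_of_nonneg hstep,
      smul_eq_mul] at hmvt
  calc _ ≤ |2 * θ' η + n * θ η - n * θ (η + 2 / n)| := norm_exp_I_mul_sub_exp_I_mul_le _ _
    _ = n * |θ (η + 2 / n) - θ η - 2 / n * θ' η| := by
        rw [← abs_of_pos hn', ← abs_mul, abs_of_pos hn', ← abs_neg]
        congr 1
        field_simp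
        ring
    _ ≤ n * (ε * (2 / n)) := by gcongr
    _ = 2 * ε := by field_simp

lemma norm_mul_phaseWave_sub_telescoping_le {H : ℝ → ℂ}
    (hθ : ∀ η ∈ Set.Icc α β, HasDerivWithinAt θ (θ' η) (Set.Icc α β) η) {n : ℕ} (hn : 0 < n)
    {y : ℤ} {ε B : ℝ} (hy : (y : ℝ) / n ∈ Set.Icc α β)
    (hy_next : ((y + 2 : ℤ) : ℝ) / n ∈ Set.Icc α β) (hB : ‖H ((y : ℝ) / n)‖ ≤ B)
    (hε : ∀ x ∈ Set.Icc α β, dist x ((y : ℝ) / n) ≤ 2 / n →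
      dist (θ' x) (θ' ((y : ℝ) / n)) ≤ ε ∧ dist (H x) (H ((y : ℝ) / n)) ≤ ε) :
    ‖H ((y : ℝ) / n) * (phaseRotation θ' ((y : ℝ) / n) - 1) * phaseWave θ n y -
      (H (((y + 2 : ℤ) : ℝ) / n) * phaseWave θ n (y + 2) - H ((y : ℝ) / n) * phaseWave θ n y)‖ ≤
      (2 * B + 1) * ε := by
  have hdist : dist (((y + 2 : ℤ) : ℝ) / n) ((y : ℝ) / n) ≤ 2 / n := by
    rw [Real.dist_eq, ← sub_div, Int.cast_add, add_sub_cancel_left, Int.cast_ofNat,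
      abs_of_nonneg (by positivity)]
  have hwave := norm_phaseRotation_mul_phaseWave_sub_le hθ hn hy hy_next
    fun x hx hxy => (hε x hx hxy).1
  have hH := (hε _ hy_next hdist).2
  rw [dist_comm, dist_eq_norm] at hH
  set η := (y : ℝ) / n
  set η_next := ((y + 2 : ℤ) : ℝ) / n
  calc _ = ‖H η * (phaseRotation θ' η * phaseWave θ n y - phaseWave θ n (y + 2)) +
          (H η - H η_next) * phaseWave θ n (y + 2)‖ := by ring_nf
    _ ≤ B * (2 * ε) + ε * 1 := by
        refine norm_add_le_of_le (norm_mul_le_of_le hB hwave) (norm_mul_le_of_le hH ?_)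
        exact (norm_phaseWave _ _ _).le
    _ = (2 * B + 1) * ε := by ring

lemma isLittleO_sum_mul_phaseRotation_sub_one {H : ℝ → ℂ}
    (hθ : ∀ η ∈ Set.Icc α β, HasDerivWithinAt θ (θ' η) (Set.Icc α β) η)
    (hθ' : ContinuousOn θ' (Set.Icc α β)) (hH : ContinuousOn H (Set.Icc α β)) :
    (fun n : ℕ => ∑ y ∈ Tset α β n,
      H ((y : ℝ) / n) * (phaseRotation θ' ((y : ℝ) / n) - 1) * phaseWave θ n y)
      =o[atTop] fun n : ℕ => (n : ℝ) := by
  obtain ⟨B, hB, hHB⟩ := (isCompact_Icc.image_of_continuousOn hH).isBounded.exists_pos_norm_le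
  rw [Set.forall_mem_image] at hHB
  refine isLittleO_iff.2 fun c hc => ?_
  set D := |β - α| + 1
  have hD : 0 < D := by positivity
  set ε := c / (2 * D * (2 * B + 1)) with hε_def
  have hε : 0 < ε := by positivity
  have hmesh := tendsto_const_div_atTop_nhds_zero_nat (2 : ℝ)
  filter_upwards [eventually_forall_dist_le_of_isCompact isCompact_Icc hθ' hmesh hε,
    eventually_forall_dist_le_of_isCompact isCompact_Icc hH hmesh hε, eventually_gt_atTop 0,
    eventually_le_mul_natCast (B * 2 + 2 * B) (half_pos hc)] with n hθ'n hHn hn hBn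
  have hcard : ((Tset α β n).card : ℝ) ≤ D * n := by
    have : (1 : ℝ) ≤ n := by exact_mod_cast hn
    linarith [card_Tset_le α β n]
  have hmem {y : ℤ} (hy : y ∈ Tset α β n) : (y : ℝ) / n ∈ Set.Icc α β := ((mem_Tset hn).1 hy).1
  calc _ ≤ (Tset α β n).card * ((2 * B + 1) * ε) + (B * 2 + 2 * B) := by
        refine norm_sum_Tset_le_of_norm_sub_sub_le
          (F := fun y : ℤ => H ((y : ℝ) / n) * phaseWave θ n y)
          (by positivity) (by positivity) hB.le (fun y hy => ?_) (fun y hy => ?_)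
          fun y hy hy_next =>
            norm_mul_phaseWave_sub_telescoping_le hθ hn (hmem hy) (hmem hy_next) (hHB (hmem hy))
              fun x hx hxy => ⟨hθ'n x hx _ (hmem hy) hxy, hHn x hx _ (hmem hy) hxy⟩
        · rw [norm_mul, norm_phaseWave, mul_one]
          exact norm_mul_le_of_le (hHB (hmem hy)) (norm_phaseRotation_sub_one_le _ _)
        · rw [norm_mul, norm_phaseWave, mul_one]
          exact hHB (hmem hy)
    _ ≤ D * n * ((2 * B + 1) * ε) + c / 2 * n := by gcongr
    _ = c * ‖(n : ℝ)‖ := by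
        rw [hε_def, Real.norm_natCast]
        field_simp
        ring

end Phase

lemma exists_continuousOn_mul_eq_of_isCompact {X : Type*} [TopologicalSpace X] {s U : Set X}
    (hs : IsCompact s) (hU : IsOpen U) {K u : X → ℂ} (hK : ContinuousOn K s)
    (hu : ContinuousOn u s) (hzero : ∀ x ∈ s, u x = 0 → x ∈ U) :
    ∃ H : X → ℂ, ContinuousOn H s ∧ (∀ x, ‖K x - H x * u x‖ ≤ ‖K x‖) ∧
      ∀ x ∈ s, x ∉ U → H x * u x = K x := by
  have hnormSq : ContinuousOn (fun x => Complex.normSq (u x)) s :=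
    Complex.continuous_normSq.comp_continuousOn hu
  obtain ⟨m, hm, hmle⟩ : ∃ m > 0, ∀ x ∈ s \ U, m ≤ Complex.normSq (u x) :=
    (hs.diff hU).exists_forall_le' (hnormSq.mono Set.sdiff_subset) fun x hx =>
      Complex.normSq_pos.2 fun h => hx.2 (hzero x hx.1 h)
  have hmax (x : X) : 0 < max (Complex.normSq (u x)) m := lt_max_of_lt_right hm
  set q : X → ℝ := fun x => Complex.normSq (u x) / max (Complex.normSq (u x)) m
  set H : X → ℂ := fun x =>
    K x * (starRingEnd ℂ) (u x) / (max (Complex.normSq (u x)) m : ℝ)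
  have hHu (x : X) : H x * u x = K x * q x := by
    simp only [H, q, Complex.ofReal_div, ← Complex.mul_conj]
    ring
  refine ⟨H, ?_, fun x => ?_, fun x hx hxU => ?_⟩
  · have hden : ContinuousOn (fun x => ((max (Complex.normSq (u x)) m : ℝ) : ℂ)) s :=
      Complex.continuous_ofReal.comp_continuousOn (hnormSq.sup continuousOn_const)
    exact (hK.mul (Complex.continuous_conj.comp_continuousOn hu)).div hden fun x _ =>
      Complex.ofReal_ne_zero.2 (hmax x).ne'
  · have hq : |1 - q x| ≤ 1 := by
      have hq_nonneg : 0 ≤ q x := div_nonneg (Complex.normSq_nonneg _) (hmax x).le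
      have hq_le_one : q x ≤ 1 := (div_le_one (hmax x)).2 (le_max_left _ _)
      rw [abs_of_nonneg (by linarith)]
      linarith
    calc ‖K x - H x * u x‖ = ‖K x‖ * |1 - q x| := by
          rw [hHu, ← Real.norm_eq_abs, ← Complex.norm_real, ← norm_mul]
          push_cast
          ring_nf
      _ ≤ ‖K x‖ := mul_le_of_le_one_right (norm_nonneg _) hq
  · have hq : q x = 1 := by
      simp only [q]
      rw [max_eq_left (hmle x ⟨hx, hxU⟩), div_self (hm.trans_le (hmle x ⟨hx, hxU⟩)).ne']
    rw [hHu, hq, Complex.ofReal_one, mul_one]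

lemma norm_sum_mul_phaseWave_le {s : Finset ℤ} {p : ℤ → Prop} [DecidablePred p] {g : ℝ → ℂ}
    {n : ℕ} {P : ℝ} (hp : ∀ y ∈ s, ¬ p y → g ((y : ℝ) / n) = 0)
    (hP : ∀ y ∈ s, ‖g ((y : ℝ) / n)‖ ≤ P) (θ : ℝ → ℝ) :
    ‖∑ y ∈ s, g ((y : ℝ) / n) * phaseWave θ n y‖ ≤ P * (s.filter p).card := by
  have hfilter : ∑ y ∈ s with p y, g ((y : ℝ) / n) * phaseWave θ n y =
      ∑ y ∈ s, g ((y : ℝ) / n) * phaseWave θ n y :=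
    Finset.sum_filter_of_ne fun y hy hne => by
      by_contra hpy
      exact hne (by rw [hp y hy hpy, zero_mul])
  rw [← hfilter]
  refine (norm_sum_le_of_le _ fun y hy => ?_).trans_eq
    (by rw [Finset.sum_const, nsmul_eq_mul, mul_comm])
  rw [norm_mul, norm_phaseWave, mul_one]
  exact hP y (Finset.mem_filter.1 hy).1

lemma isLittleO_sum_mul_phaseWave {θ θ' : ℝ → ℝ} {α β : ℝ} {K : ℝ → ℂ}
    (hθ : ∀ η ∈ Set.Icc α β, HasDerivWithinAt θ (θ' η) (Set.Icc α β) η)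
    (hθ' : ContinuousOn θ' (Set.Icc α β))
    (hres : {η ∈ Set.Icc α β | phaseRotation θ' η = 1}.Finite)
    (hK : ContinuousOn K (Set.Icc α β)) :
    (fun n : ℕ => ∑ y ∈ Tset α β n, K ((y : ℝ) / n) * phaseWave θ n y)
      =o[atTop] fun n : ℕ => (n : ℝ) := by
  classical
  obtain ⟨P, hP, hKP⟩ := (isCompact_Icc.image_of_continuousOn hK).isBounded.exists_pos_norm_le
  rw [Set.forall_mem_image] at hKP
  refine isLittleO_iff.2 fun c hc => ?_
  obtain ⟨δ, hδ, hcard⟩ := exists_eventually_card_filter_Tset_thickening_le α β hres.toFinset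
    (show 0 < c / (2 * P) by positivity)
  set U := Metric.thickening δ (hres.toFinset : Set ℝ)
  obtain ⟨H, hH, hle, heq⟩ := exists_continuousOn_mul_eq_of_isCompact isCompact_Icc
    (U := U) Metric.isOpen_thickening hK
    ((continuousOn_phaseRotation hθ').sub (continuousOn_const (c := (1 : ℂ)))) fun η hη hzero =>
      Metric.self_subset_thickening hδ _ (hres.mem_toFinset.2 ⟨hη, sub_eq_zero.1 hzero⟩)
  filter_upwards [isLittleO_iff.1 (isLittleO_sum_mul_phaseRotation_sub_one hθ hθ' hH) (half_pos hc),
    hcard, eventually_gt_atTop 0] with n hmain hcard hn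
  have hmem {y : ℤ} (hy : y ∈ Tset α β n) : (y : ℝ) / n ∈ Set.Icc α β := ((mem_Tset hn).1 hy).1
  have hrest := norm_sum_mul_phaseWave_le (s := Tset α β n) (p := fun y : ℤ => (y : ℝ) / n ∈ U)
    (g := fun η => K η - H η * (phaseRotation θ' η - 1)) (P := P)
    (fun y hy hyU => sub_eq_zero.2 (heq _ (hmem hy) hyU).symm)
    (fun y hy => (hle _).trans (hKP (hmem hy))) θ
  calc _ = ‖∑ y ∈ Tset α β n,
            H ((y : ℝ) / n) * (phaseRotation θ' ((y : ℝ) / n) - 1) * phaseWave θ n y +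
          ∑ y ∈ Tset α β n, (K ((y : ℝ) / n) -
            H ((y : ℝ) / n) * (phaseRotation θ' ((y : ℝ) / n) - 1)) * phaseWave θ n y‖ := by
        simp only [← Finset.sum_add_distrib, ← add_mul, add_sub_cancel]
    _ ≤ c / 2 * ‖(n : ℝ)‖ + P * (c / (2 * P) * n) :=
        norm_add_le_of_le hmain (hrest.trans (by gcongr))
    _ = c * ‖(n : ℝ)‖ := by
        rw [Real.norm_natCast]
        field_simp
        ring

/-! ### The phase of the quantum walk -/

section WalkPhase

variable {a b : ℂ} (hab1 : ‖a‖ ^ 2 + ‖b‖ ^ 2 = 1) {η : ℝ} (hη : |η| < ‖a‖)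
include hab1 hη

lemma one_sub_sq_pos_of_abs_lt_norm : 0 < 1 - η ^ 2 := by
  nlinarith [sq_lt_sq.2 (hη.trans_eq (abs_norm a).symm)]

lemma sq_arg_tF :
    (‖b‖ * η / (‖a‖ * √(1 - η ^ 2))) ^ 2 = ‖b‖ ^ 2 * η ^ 2 / (‖a‖ ^ 2 * (1 - η ^ 2)) := by
  rw [div_pow, mul_pow, mul_pow, Real.sq_sqrt (one_sub_sq_pos_of_abs_lt_norm hab1 hη).le]

lemma abs_arg_tF_lt_one : |‖b‖ * η / (‖a‖ * √(1 - η ^ 2))| < 1 := by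
  have ha : 0 < ‖a‖ := (abs_nonneg η).trans_lt hη
  have hpos := one_sub_sq_pos_of_abs_lt_norm hab1 hη
  rw [← sq_lt_one_iff_abs_lt_one, sq_arg_tF hab1 hη, div_lt_one (by positivity)]
  nlinarith [sq_lt_sq.2 (hη.trans_eq (abs_norm a).symm)]

lemma sin_tF : Real.sin (tF a b η) = ‖b‖ * η / (‖a‖ * √(1 - η ^ 2)) :=
  have h := abs_lt.1 (abs_arg_tF_lt_one hab1 hη)
  Real.sin_arcsin h.1.le h.2.le

lemma tF_mem_Ioo : tF a b η ∈ Set.Ioo (-(Real.pi / 2)) (Real.pi / 2) :=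
  have h := abs_lt.1 (abs_arg_tF_lt_one hab1 hη)
  ⟨Real.neg_pi_div_two_lt_arcsin.2 h.1, Real.arcsin_lt_pi_div_two.2 h.2⟩

lemma differentiableAt_tF : DifferentiableAt ℝ (tF a b) η := by
  have h := abs_lt.1 (abs_arg_tF_lt_one hab1 hη)
  have ha : ‖a‖ ≠ 0 := ((abs_nonneg η).trans_lt hη).ne'
  have hpos := one_sub_sq_pos_of_abs_lt_norm hab1 hη
  have harg : DifferentiableAt ℝ (fun x => ‖b‖ * x / (‖a‖ * √(1 - x ^ 2))) η := by
    have hsqrt : DifferentiableAt ℝ (fun x => √(1 - x ^ 2)) η :=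
      DifferentiableAt.sqrt (by fun_prop) hpos.ne'
    exact DifferentiableAt.div (by fun_prop) (hsqrt.const_mul _)
      (mul_ne_zero ha (Real.sqrt_pos.2 hpos).ne')
  exact (Real.differentiableAt_arcsin.2 ⟨h.1.ne', h.2.ne⟩).comp η harg

lemma one_sub_sq_norm_mul_cos_tF :
    1 - (‖a‖ * Real.cos (tF a b η)) ^ 2 = (‖b‖ / √(1 - η ^ 2)) ^ 2 := by
  have ha : ‖a‖ ≠ 0 := ((abs_nonneg η).trans_lt hη).ne'
  have hpos := one_sub_sq_pos_of_abs_lt_norm hab1 hη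
  rw [mul_pow, Real.cos_sq', sin_tF hab1 hη, sq_arg_tF hab1 hη, div_pow, Real.sq_sqrt hpos.le]
  field_simp
  linear_combination -(1 - η ^ 2) * hab1

variable (hb : b ≠ 0)
include hb

lemma hasDerivAt_muF : HasDerivAt (muF a) η (tF a b η) := by
  have ha : 0 < ‖a‖ := (abs_nonneg η).trans_lt hη
  have hb' : 0 < ‖b‖ := norm_pos_iff.2 hb
  have hsqrt : 0 < √(1 - η ^ 2) := Real.sqrt_pos.2 (one_sub_sq_pos_of_abs_lt_norm hab1 hη)
  have hcos := one_sub_sq_norm_mul_cos_tF hab1 hη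
  have hlt : |‖a‖ * Real.cos (tF a b η)| < 1 := by
    rw [← sq_lt_one_iff_abs_lt_one, ← sub_pos, hcos]
    exact pow_pos (div_pos hb' hsqrt) 2
  refine ((Real.hasDerivAt_arccos (abs_lt.1 hlt).1.ne' (abs_lt.1 hlt).2.ne).comp (tF a b η)
    ((Real.hasDerivAt_cos _).const_mul ‖a‖)).congr_deriv ?_
  rw [hcos, Real.sqrt_sq (by positivity), sin_tF hab1 hη]
  field_simp

lemma hasDerivAt_thetaF : HasDerivAt (thetaF a b) (-2 * tF a b η) η := by
  have ht := (differentiableAt_tF hab1 hη).hasDerivAt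
  refine ((((hasDerivAt_muF hab1 hη hb).comp η ht).const_mul 2).sub
    (((hasDerivAt_id η).const_mul 2).mul ht)).congr_deriv ?_
  simp only [id_eq]
  ring

lemma eq_zero_of_tF_eq_zero (h : tF a b η = 0) : η = 0 := by
  have ha : ‖a‖ ≠ 0 := ((abs_nonneg η).trans_lt hη).ne'
  have hsqrt := (Real.sqrt_pos.2 (one_sub_sq_pos_of_abs_lt_norm hab1 hη)).ne'
  simpa [tF, Real.arcsin_eq_zero_iff, hb, ha, hsqrt] using h

lemma eq_zero_of_phaseRotation_eq_one (h : phaseRotation (fun x => -2 * tF a b x) η = 1) :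
    η = 0 := by
  obtain ⟨hlower, hupper⟩ := tF_mem_Ioo hab1 hη
  have hsin : Real.sin (-2 * tF a b η) = 0 := by
    have hnorm := Complex.norm_exp_I_mul_ofReal_sub_one (2 * (-2 * tF a b η))
    rw [phaseRotation] at h
    rw [h, sub_self, norm_zero, mul_div_cancel_left₀ _ two_ne_zero, eq_comm, norm_eq_zero] at hnorm
    exact (mul_eq_zero.1 hnorm).resolve_left two_ne_zero
  have htwo := (Real.sin_eq_zero_iff_of_lt_of_lt (by linarith) (by linarith)).1 hsin
  exact eq_zero_of_tF_eq_zero hab1 hη hb (by linarith)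

end WalkPhase

theorem stmt12_general (a b : ℂ) (hab1 : ‖a‖ ^ 2 + ‖b‖ ^ 2 = 1) (hb : b ≠ 0)
    (α β : ℝ) (hα : -‖a‖ < α) (hβ : β < ‖a‖)
    (K : ℝ → ℂ) (hK : ContinuousOn K (Set.Icc α β)) :
    Tendsto
      (fun n : ℕ => ((2 / (n : ℝ) : ℝ) : ℂ) *
        ∑ y ∈ Tset α β n,
          K ((y : ℝ) / (n : ℝ)) *
            Complex.exp (Complex.I * (n : ℂ) * ((thetaF a b ((y : ℝ) / (n : ℝ)) : ℝ) : ℂ)))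
      atTop (𝓝 0) := by
  have habs {η : ℝ} (h : η ∈ Set.Icc α β) : |η| < ‖a‖ :=
    abs_lt.2 ⟨hα.trans_le h.1, h.2.trans_lt hβ⟩
  have hres : {η ∈ Set.Icc α β | phaseRotation (fun x => -2 * tF a b x) η = 1}.Finite :=
    (Set.finite_singleton 0).subset fun η h =>
      eq_zero_of_phaseRotation_eq_one hab1 (habs h.1) hb h.2
  have hsum := isLittleO_sum_mul_phaseWave
    (fun η h => (hasDerivAt_thetaF hab1 (habs h) hb).hasDerivWithinAt)
    (continuousOn_const.mul fun η h =>
      (differentiableAt_tF hab1 (habs h)).continuousAt.continuousWithinAt) hres hK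
  have hlim := (hsum.tendsto_inv_smul_nhds_zero).const_smul (2 : ℝ)
  rw [smul_zero] at hlim
  refine hlim.congr fun n => ?_
  rw [smul_smul, ← div_eq_mul_inv, Complex.real_smul]
  rfl

/-- Lemma `RmL`: for a smooth `K` on `[α,β]`,
`(2/n) ∑_{j=0}^{s_n} K(y_j/n) e^{inθ(y_j/n)} → 0` (the sum over the whole enumeration equals
the sum over the finite set `Tset α β n`). -/
theorem stmt12 (a b : ℂ) (hab1 : ‖a‖ ^ 2 + ‖b‖ ^ 2 = 1) (hab : a * b ≠ 0)
    (α β : ℝ) (hα : -‖a‖ < α) (hαβ : α < β) (hβ : β < ‖a‖)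
    (K : ℝ → ℂ) (hK : ContDiffOn ℝ (⊤ : ℕ∞) K (Set.Icc α β)) :
    Tendsto
      (fun n : ℕ => ((2 / (n : ℝ) : ℝ) : ℂ) *
        ∑ y ∈ Tset α β n,
          K ((y : ℝ) / (n : ℝ)) *
            Complex.exp (Complex.I * (n : ℂ) * ((thetaF a b ((y : ℝ) / (n : ℝ)) : ℝ) : ℂ)))
      atTop (𝓝 0) :=
  stmt12_general a b hab1 (right_ne_zero_of_mul hab) α β hα hβ K hK.continuousOn
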